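/- Every k-connected finite simple graph G with minimum degree δ(G) ≥ ⌊3k/2⌋ + 2 contains an edge xy such that G − {x, y} is still k-connected. -/

import Mathlib

/-- A graph `G` is `k`-connected if it has at least `k+1` vertices and
deleting any set of fewer than `k` vertices leaves a connected graph. -/
def KConnected {V : Type*} (G : SimpleGraph V) (k : ℕ) : Prop :=
  k + 1 ≤ Nat.card V ∧
    ∀ X : Finset V, X.card < k → (G.induce ((X : Set V)ᶜ)).Connected

/-!
Among the separations of order at most `j` of a `j`-connected graph take one, `(F, T, R)`, whose
side `F` is as small as possible. If all sides have more than `j / 2` vertices, as minimum degree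
`⌊3j/2⌋` ensures, then crossing `(F, T, R)` with another separation `(A, S, B)` of order at most `j`
shows that `S` avoids `F`: otherwise submodularity of the order yields a separation of order less
than `j`, or one of order at most `j` with a side properly inside `F`. Hence deleting a vertex of
`F` keeps the graph `j`-connected.

For edges, if `G` is `(k + 1)`-connected, apply this with `j = k + 1` and let `x y` be any edge at a
vertex `x` of `F`. Otherwise take `F` for `j = k`, and inside it a minimal proper subset `A` that is
a side of a separation `(A, S, B)` of order at most `k + 1`. This order is exactly `k + 1`, so some
`y ∈ S` lies outside `T`; it has a neighbour `x ∈ A`, and `y ∈ F`. A separator of order at most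
`k + 1` through `x` and `y` would cross `(A, S, B)` and yield either a separator of order at most
`k` through `y ∈ F`, or a separation of order at most `k + 1` with a side properly inside `A`.
-/

/-- The finite sets `A`, `S`, `B` partition the vertex set, `A` and `B` are nonempty, and no edge
joins `A` to `B`: the *separator* `S` separates the *sides* `A` and `B`. The order of the
separation is the cardinality of `S`. -/
structure IsSeparation {V : Type*} (G : SimpleGraph V) (A S B : Finset V) : Prop where
  nonempty_left : A.Nonempty
  nonempty_right : B.Nonempty
  cover : ∀ v, v ∈ A ∨ v ∈ S ∨ v ∈ B
  disjoint_left_separator : Disjoint A S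
  disjoint_sides : Disjoint A B
  disjoint_separator_right : Disjoint S B
  not_adj : ∀ a ∈ A, ∀ b ∈ B, ¬ G.Adj a b

/-- For separations with sides `A`, `A'` and separators `S`, `S'`, the separator that cuts off
`A ∩ A'`. -/
def cornerSeparator {V : Type*} [DecidableEq V] (A S A' S' : Finset V) : Finset V :=
  A ∩ S' ∪ S ∩ S' ∪ S ∩ A'

/-- Among all sides of separations of order at most `j`, the side `F` of the separation
`(F, T, R)` has the fewest vertices. When the graph is `j`-connected, `F` is an atom in the sense of
Mader. -/
structure IsAtomSeparation {V : Type*} (G : SimpleGraph V) (j : ℕ) (F T R : Finset V) : Prop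
    extends IsSeparation G F T R where
  card_separator_le : T.card ≤ j
  card_le : ∀ A S B, IsSeparation G A S B → S.card ≤ j → F.card ≤ A.card

section Separations

open Finset

variable {V : Type*} {G : SimpleGraph V} {A S B A' S' B' F T R : Finset V} {j k : ℕ}

section CornerSeparator

variable [DecidableEq V]

theorem cornerSeparator_comm (A S A' S' : Finset V) :
    cornerSeparator A S A' S' = cornerSeparator A' S' A S := by
  ext v
  simp only [cornerSeparator, mem_union, mem_inter]
  tauto

theorem card_cornerSeparator_le (A S A' S' : Finset V) :
    #(cornerSeparator A S A' S') ≤ #(A ∩ S') + #(S ∩ S') + #(S ∩ A') :=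
  (card_union_le _ _).trans <| Nat.add_le_add_right (card_union_le _ _) _

end CornerSeparator

namespace IsSeparation

theorem symm (h : IsSeparation G A S B) : IsSeparation G B S A where
  nonempty_left := h.nonempty_right
  nonempty_right := h.nonempty_left
  cover v := by have := h.cover v; tauto
  disjoint_left_separator := h.disjoint_separator_right.symm
  disjoint_sides := h.disjoint_sides.symm
  disjoint_separator_right := h.disjoint_left_separator.symm
  not_adj b hb a ha hba := h.not_adj a ha b hb hba.symm

theorem not_connected_induce_compl (h : IsSeparation G A S B) :
    ¬ (G.induce (S : Set V)ᶜ).Connected := by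
  intro hconn
  obtain ⟨a, ha⟩ := h.nonempty_left
  obtain ⟨b, hb⟩ := h.nonempty_right
  have haS : a ∉ S := disjoint_left.1 h.disjoint_left_separator ha
  have hbS : b ∉ S := disjoint_right.1 h.disjoint_separator_right hb
  have hbA : b ∉ A := disjoint_right.1 h.disjoint_sides hb
  obtain ⟨p⟩ := hconn.preconnected ⟨a, haS⟩ ⟨b, hbS⟩
  obtain ⟨d, -, hdA, hdA'⟩ := p.exists_boundary_dart {w | w.1 ∈ A} ha hbA
  rcases h.cover d.snd.1 with hA | hS | hB
  · exact hdA' hA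
  · exact d.snd.2 hS
  · exact h.not_adj _ hdA _ hB d.adj

theorem degree_lt_card_add_card (h : IsSeparation G A S B) {a : V} (ha : a ∈ A)
    [Fintype (G.neighborSet a)] : G.degree a < #A + #S := by
  classical
  have hsub : G.neighborFinset a ⊆ A.erase a ∪ S := by
    intro v hv
    rw [SimpleGraph.mem_neighborFinset] at hv
    rw [mem_union, mem_erase]
    rcases h.cover v with hA | hS | hB
    · exact Or.inl ⟨hv.ne', hA⟩
    · exact Or.inr hS
    · exact absurd hv (h.not_adj a ha v hB)
  calc G.degree a = #(G.neighborFinset a) := (G.card_neighborFinset_eq_degree a).symm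
    _ ≤ #(A.erase a) + #S := (card_le_card hsub).trans (card_union_le _ _)
    _ < #A + #S := Nat.add_lt_add_right (card_erase_lt_of_mem ha) _

theorem lt_two_mul_card_left [G.LocallyFinite] (h : IsSeparation G A S B) (hS : #S ≤ j)
    (hδ : ∀ v, 3 * j / 2 ≤ G.degree v) : j < 2 * #A := by
  obtain ⟨a, ha⟩ := h.nonempty_left
  have := h.degree_lt_card_add_card ha
  have := hδ a
  omega

section DecidableEq

variable [DecidableEq V]

theorem card_eq_sum_card_inter (h : IsSeparation G A S B) (X : Finset V) :
    #X = #(A ∩ X) + #(S ∩ X) + #(B ∩ X) := by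
  have hX : X = A ∩ X ∪ S ∩ X ∪ B ∩ X := by
    ext v
    have := h.cover v
    simp only [mem_union, mem_inter]
    tauto
  conv_lhs => rw [hX]
  rw [card_union_of_disjoint, card_union_of_disjoint]
  · exact h.disjoint_left_separator.mono inter_subset_left inter_subset_left
  · rw [disjoint_union_left]
    exact ⟨h.disjoint_sides.mono inter_subset_left inter_subset_left,
      h.disjoint_separator_right.mono inter_subset_left inter_subset_left⟩

theorem subset_separator (h : IsSeparation G A S B) {X : Finset V} (hA : A ∩ X = ∅)
    (hB : B ∩ X = ∅) : X ⊆ S := by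
  intro v hv
  rcases h.cover v with hvA | hvS | hvB
  · exact absurd (mem_inter.2 ⟨hvA, hv⟩) (hA ▸ notMem_empty v)
  · exact hvS
  · exact absurd (mem_inter.2 ⟨hvB, hv⟩) (hB ▸ notMem_empty v)

theorem erase_left (h : IsSeparation G A S B) {v : V} (hv : v ∈ A) (hne : (A.erase v).Nonempty) :
    IsSeparation G (A.erase v) (insert v S) B where
  nonempty_left := hne
  nonempty_right := h.nonempty_right
  cover w := by
    have := h.cover w
    simp only [mem_erase, mem_insert]
    tauto
  disjoint_left_separator := disjoint_insert_right.2
    ⟨notMem_erase v A, h.disjoint_left_separator.mono_left (erase_subset v A)⟩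
  disjoint_sides := h.disjoint_sides.mono_left (erase_subset v A)
  disjoint_separator_right := disjoint_insert_left.2
    ⟨disjoint_left.1 h.disjoint_sides hv, h.disjoint_separator_right⟩
  not_adj a ha := h.not_adj a (mem_of_mem_erase ha)

theorem erase_separator (h : IsSeparation G A S B) {s : V} (hs : s ∈ S)
    (hadj : ∀ a ∈ A, ¬ G.Adj a s) : IsSeparation G A (S.erase s) (insert s B) where
  nonempty_left := h.nonempty_left
  nonempty_right := insert_nonempty s B
  cover w := by
    have := h.cover w
    simp only [mem_erase, mem_insert]
    tauto
  disjoint_left_separator := h.disjoint_left_separator.mono_right (erase_subset s S)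
  disjoint_sides := disjoint_insert_right.2
    ⟨disjoint_right.1 h.disjoint_left_separator hs, h.disjoint_sides⟩
  disjoint_separator_right := disjoint_insert_right.2
    ⟨notMem_erase s S, h.disjoint_separator_right.mono_left (erase_subset s S)⟩
  not_adj a ha b hb := by
    rcases mem_insert.1 hb with rfl | hb
    · exact hadj a ha
    · exact h.not_adj a ha b hb

theorem corner (h : IsSeparation G A S B) (h' : IsSeparation G A' S' B')
    (hne : (A ∩ A').Nonempty) :
    IsSeparation G (A ∩ A') (cornerSeparator A S A' S') (B ∪ B') := by
  have hAS := disjoint_left.1 h.disjoint_left_separator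
  have hAB := disjoint_left.1 h.disjoint_sides
  have hSB := disjoint_left.1 h.disjoint_separator_right
  have hAS' := disjoint_left.1 h'.disjoint_left_separator
  have hAB' := disjoint_left.1 h'.disjoint_sides
  have hSB' := disjoint_left.1 h'.disjoint_separator_right
  refine ⟨hne, h.nonempty_right.mono subset_union_left, fun v => ?_, ?_, ?_, ?_, ?_⟩
  · have := h.cover v
    have := h'.cover v
    simp only [cornerSeparator, mem_inter, mem_union]
    tauto
  · simp only [disjoint_left, cornerSeparator, mem_inter, mem_union]
    grind
  · simp only [disjoint_left, mem_inter, mem_union]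
    grind
  · simp only [disjoint_left, cornerSeparator, mem_inter, mem_union]
    grind
  · intro a ha b hb
    rw [mem_inter] at ha
    rcases mem_union.1 hb with hb | hb
    · exact h.not_adj a ha.1 b hb
    · exact h'.not_adj a ha.2 b hb

theorem card_cornerSeparator_add_card_cornerSeparator_le (h : IsSeparation G A S B)
    (h' : IsSeparation G A' S' B') :
    #(cornerSeparator A S A' S') + #(cornerSeparator B S B' S') ≤ #S + #S' := by
  have hA := card_cornerSeparator_le A S A' S'
  have hB := card_cornerSeparator_le B S B' S'
  have hS := h'.card_eq_sum_card_inter S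
  have hS' := h.card_eq_sum_card_inter S'
  simp only [inter_comm _ S] at hS
  omega

theorem lt_two_mul_card_separator_inter (h : IsSeparation G A S B)
    (h' : IsSeparation G A' S' B') (hS' : #S' ≤ j) (hA : j < 2 * #A) (hA' : j < 2 * #A')
    (hcorner : (B ∩ A').Nonempty → j ≤ #(cornerSeparator B S A' S')) (hsub : A ⊆ S') :
    j < 2 * #(S ∩ A') := by
  rcases (B ∩ A').eq_empty_or_nonempty with hempty | hne
  · have hAA' : A ∩ A' = ∅ :=
      disjoint_iff_inter_eq_empty.1 (h'.disjoint_left_separator.symm.mono_left hsub)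
    rwa [inter_eq_right.2 (h.subset_separator hAA' hempty)]
  · have hle := (hcorner hne).trans (card_cornerSeparator_le B S A' S')
    have hsplit := h.card_eq_sum_card_inter S'
    rw [inter_eq_left.2 hsub] at hsplit
    omega

theorem not_left_subset_separator (h : IsSeparation G A S B) (h' : IsSeparation G A' S' B')
    (hS : #S ≤ j) (hS' : #S' ≤ j) (hA : j < 2 * #A) (hA' : j < 2 * #A') (hB' : j < 2 * #B')
    (hcornerA' : (B ∩ A').Nonempty → j ≤ #(cornerSeparator B S A' S'))
    (hcornerB' : (B ∩ B').Nonempty → j ≤ #(cornerSeparator B S B' S')) : ¬ A ⊆ S' := by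
  intro hsub
  have hSA' := h.lt_two_mul_card_separator_inter h' hS' hA hA' hcornerA' hsub
  have hSB' := h.lt_two_mul_card_separator_inter h'.symm hS' hA hB' hcornerB' hsub
  have hsplit := h'.card_eq_sum_card_inter S
  rw [inter_comm A', inter_comm B'] at hsplit
  omega

theorem exists_isSeparation_of_crossing (hF : IsSeparation G F T R) (h : IsSeparation G A S B)
    (hT : #T ≤ j) (hS : #S ≤ j) (hFj : j < 2 * #F) (hRj : j < 2 * #R) (hAj : j < 2 * #A)
    (hBj : j < 2 * #B) :
    ∃ A' S' B', IsSeparation G A' S' B' ∧ T ∩ S ⊆ S' ∧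
      (#S' < j ∨ #S' ≤ j ∧ A' ⊆ F ∧ Disjoint A' S) := by
  by_contra! hcon
  have inter_subset (X Y : Finset V) : T ∩ S ⊆ cornerSeparator X T Y S :=
    subset_union_right.trans subset_union_left
  have corner_left {X Y : Finset V} (hX : IsSeparation G X S Y) (hne : (F ∩ X).Nonempty) :
      j < #(cornerSeparator F T X S) := by
    by_contra! hle
    exact (hcon _ _ _ (hF.corner hX hne) (inter_subset F X)).2 hle inter_subset_left
      (hX.disjoint_left_separator.mono_left inter_subset_right)
  have corner_right {X Y : Finset V} (hX : IsSeparation G X S Y) (hne : (R ∩ X).Nonempty) :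
      j ≤ #(cornerSeparator R T X S) :=
    (hcon _ _ _ (hF.symm.corner hX hne) (inter_subset R X)).1
  have opposite {X Y : Finset V} (hX : IsSeparation G X S Y) : F ∩ X = ∅ ∨ R ∩ Y = ∅ := by
    by_contra! hne
    have := corner_left hX hne.1
    have := corner_right hX.symm hne.2
    have := hF.card_cornerSeparator_add_card_cornerSeparator_le hX
    omega
  have not_subset {X Y : Finset V} (hX : IsSeparation G X S Y) (hXj : j < 2 * #X) : ¬ X ⊆ T := by
    refine hX.not_left_subset_separator hF hS hT hXj hFj hRj ?_ ?_ <;>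
      rw [cornerSeparator_comm, inter_comm]
    · exact fun hne => (corner_left hX.symm hne).le
    · exact corner_right hX.symm
  -- One of each pair of opposite corners is empty, so one of the four sides has both of its
  -- corners empty and lies in the separator of the other separation.
  rcases opposite h with hFA | hRB <;> rcases opposite h.symm with hFB | hRA
  · refine hF.not_left_subset_separator h hT hS hFj hAj hBj (corner_right h) (corner_right h.symm)
      (h.subset_separator ?_ ?_) <;> rwa [inter_comm]
  · exact not_subset h hAj (hF.subset_separator hFA hRA)
  · exact not_subset h.symm hBj (hF.subset_separator hFB hRB)
  · refine hF.symm.not_left_subset_separator h hT hS hRj hAj hBj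
      (fun hne => (corner_left h hne).le) (fun hne => (corner_left h.symm hne).le)
      (h.subset_separator ?_ ?_) <;> rwa [inter_comm]

theorem of_induce_compl {W : Finset V} {A S B : Finset ((W : Set V)ᶜ : Set V)}
    (h : IsSeparation (G.induce (W : Set V)ᶜ) A S B) :
    IsSeparation G (A.map (.subtype _)) (S.map (.subtype _) ∪ W) (B.map (.subtype _)) where
  nonempty_left := h.nonempty_left.map
  nonempty_right := h.nonempty_right.map
  cover v := by
    by_cases hv : v ∈ W
    · exact Or.inr (Or.inl (mem_union_right _ hv))
    · have := h.cover ⟨v, hv⟩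
      simpa [hv] using this
  disjoint_left_separator := by
    refine disjoint_union_right.2 ⟨(disjoint_map _).2 h.disjoint_left_separator, ?_⟩
    exact disjoint_left.2 fun v hv => property_of_mem_map_subtype A hv
  disjoint_sides := (disjoint_map _).2 h.disjoint_sides
  disjoint_separator_right := by
    refine disjoint_union_left.2 ⟨(disjoint_map _).2 h.disjoint_separator_right, ?_⟩
    exact disjoint_right.2 fun v hv => property_of_mem_map_subtype B hv
  not_adj := by
    intro a ha b hb
    obtain ⟨a', ha', rfl⟩ := mem_map.1 ha
    obtain ⟨b', hb', rfl⟩ := mem_map.1 hb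
    exact h.not_adj a' ha' b' hb'

end DecidableEq

theorem exists_isAtomSeparation (h : IsSeparation G A S B) (hS : #S ≤ j) :
    ∃ F T R, IsAtomSeparation G j F T R := by
  obtain ⟨F, ⟨T, R, hF, hT⟩, hmin⟩ := exists_minimalFor_of_wellFoundedLT
    (fun F => ∃ T R, IsSeparation G F T R ∧ #T ≤ j) card ⟨A, S, B, h, hS⟩
  refine ⟨F, T, R, hF, hT, fun A S B h hS => ?_⟩
  exact (le_total #F #A).elim id (hmin ⟨S, B, h, hS⟩)

end IsSeparation

theorem exists_isSeparation_of_not_connected [Finite V] {X : Finset V}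
    (hX : ((X : Set V)ᶜ).Nonempty) (hconn : ¬ (G.induce (X : Set V)ᶜ).Connected) :
    ∃ A B, IsSeparation G A X B := by
  classical
  have := Fintype.ofFinite V
  have : Nonempty ((X : Set V)ᶜ : Set V) := hX.to_subtype
  obtain ⟨u, v, huv⟩ : ∃ u v, ¬ (G.induce (X : Set V)ᶜ).Reachable u v := by
    by_contra! hreach
    exact hconn ⟨hreach⟩
  let A : Finset V := {w | ∃ hw : w ∉ X, (G.induce (X : Set V)ᶜ).Reachable u ⟨w, hw⟩}
  let B : Finset V := {w | ∃ hw : w ∉ X, ¬ (G.induce (X : Set V)ᶜ).Reachable u ⟨w, hw⟩}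
  have mem_A {w : V} : w ∈ A ↔ ∃ hw : w ∉ X, (G.induce (X : Set V)ᶜ).Reachable u ⟨w, hw⟩ := by
    simp only [A, mem_filter_univ]
  have mem_B {w : V} : w ∈ B ↔ ∃ hw : w ∉ X, ¬ (G.induce (X : Set V)ᶜ).Reachable u ⟨w, hw⟩ := by
    simp only [B, mem_filter_univ]
  refine ⟨A, B, ⟨u, mem_A.2 ⟨u.2, .rfl⟩⟩, ⟨v, mem_B.2 ⟨v.2, huv⟩⟩, fun w => ?_, ?_, ?_, ?_, ?_⟩
  · rw [mem_A, mem_B]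
    by_cases hw : w ∈ X
    · exact Or.inr (Or.inl hw)
    · by_cases hr : (G.induce (X : Set V)ᶜ).Reachable u ⟨w, hw⟩
      · exact Or.inl ⟨hw, hr⟩
      · exact Or.inr (Or.inr ⟨hw, hr⟩)
  · exact disjoint_left.2 fun w hw => (mem_A.1 hw).1
  · exact disjoint_left.2 fun w hA hB => (mem_B.1 hB).2 (mem_A.1 hA).2
  · exact disjoint_right.2 fun w hw => (mem_B.1 hw).1
  · intro a ha b hb hab
    obtain ⟨haX, hua⟩ := mem_A.1 ha
    obtain ⟨hbX, hub⟩ := mem_B.1 hb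
    have hab' : (G.induce (X : Set V)ᶜ).Adj ⟨a, haX⟩ ⟨b, hbX⟩ := hab
    exact hub (hua.trans hab'.reachable)

theorem kConnected_iff_forall_isSeparation :
    KConnected G k ↔ k + 1 ≤ Nat.card V ∧ ∀ A S B, IsSeparation G A S B → k ≤ #S := by
  refine and_congr_right fun hcard => ⟨fun hconn A S B h => ?_, fun hsep X hX => ?_⟩
  · by_contra! hS
    exact h.not_connected_induce_compl (hconn S hS)
  · by_contra hconn
    have : Finite V := Nat.finite_of_card_ne_zero (by omega)
    have hXne : ((X : Set V)ᶜ).Nonempty := by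
      rw [Set.nonempty_compl]
      intro huniv
      have := Set.ncard_univ V
      rw [← huniv, Set.ncard_coe_finset] at this
      omega
    obtain ⟨A, B, h⟩ := exists_isSeparation_of_not_connected hXne hconn
    exact absurd (hsep A X B h) hX.not_ge

theorem KConnected.le_card_separator (hG : KConnected G k) (h : IsSeparation G A S B) : k ≤ #S :=
  (kConnected_iff_forall_isSeparation.1 hG).2 A S B h

theorem kConnected_induce_compl {W : Finset V} (hcard : k + 1 + #W ≤ Nat.card V)
    (hsep : ∀ A S B, IsSeparation G A S B → W ⊆ S → k + #W ≤ #S) :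
    KConnected (G.induce (W : Set V)ᶜ) k := by
  classical
  have : Finite V := Nat.finite_of_card_ne_zero (by omega)
  refine kConnected_iff_forall_isSeparation.2 ⟨?_, fun A S B h => ?_⟩
  · have := Set.ncard_add_ncard_compl (W : Set V)
    rw [Set.ncard_coe_finset] at this
    rw [Nat.card_coe_set_eq]
    omega
  · have hle := (hsep _ _ _ h.of_induce_compl subset_union_right).trans (card_union_le _ _)
    rw [card_map] at hle
    omega

namespace IsAtomSeparation

theorem lt_card_separator_of_mem (hF : IsAtomSeparation G j F T R) (hG : KConnected G j)
    (hFj : j < 2 * #F) (h : IsSeparation G A S B) {x : V} (hxF : x ∈ F) (hxS : x ∈ S) :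
    j < #S := by
  classical
  by_contra! hS
  have hRj := hFj.trans_le (Nat.mul_le_mul_left 2 (hF.card_le _ _ _ hF.symm hF.card_separator_le))
  have hAj := hFj.trans_le (Nat.mul_le_mul_left 2 (hF.card_le _ _ _ h hS))
  have hBj := hFj.trans_le (Nat.mul_le_mul_left 2 (hF.card_le _ _ _ h.symm hS))
  obtain ⟨A', S', B', h', -, hlt | ⟨hle, hsub, hdisj⟩⟩ := hF.exists_isSeparation_of_crossing h
    hF.card_separator_le hS hFj hRj hAj hBj
  · exact (hG.le_card_separator h').not_gt hlt
  · have hssub : A' ⊂ F :=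
      (ssubset_iff_of_subset hsub).2 ⟨x, hxF, disjoint_right.1 hdisj hxS⟩
    exact (hF.card_le _ _ _ h' hle).not_gt (card_lt_card hssub)

theorem exists_adj_of_mem_separator (hF : IsAtomSeparation G j F T R)
    (h : IsSeparation G A S B) (hAF : A ⊂ F) (hS : #S ≤ j + 1) {s : V} (hs : s ∈ S) :
    ∃ a ∈ A, G.Adj a s := by
  classical
  by_contra! hadj
  have hle : #(S.erase s) ≤ j := by
    rw [card_erase_of_mem hs]
    omega
  exact (hF.card_le _ _ _ (h.erase_separator hs hadj) hle).not_gt (card_lt_card hAF)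

theorem exists_minimal_isSeparation_ssubset (hF : IsAtomSeparation G j F T R) (hF2 : 1 < #F) :
    ∃ A S B, IsSeparation G A S B ∧ A ⊂ F ∧ #S = j + 1 ∧
      ∀ A' S' B', IsSeparation G A' S' B' → A' ⊂ A → j + 1 < #S' := by
  classical
  obtain ⟨x, hx⟩ := hF.nonempty_left
  have hne : (F.erase x).Nonempty := by
    rw [← card_pos, card_erase_of_mem hx]
    omega
  obtain ⟨A, ⟨S, B, h, hAF, hS⟩, hmin⟩ := exists_minimal_of_wellFoundedLT
    (fun A => ∃ S B, IsSeparation G A S B ∧ A ⊂ F ∧ #S ≤ j + 1)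
    ⟨_, _, _, hF.erase_left hx hne, erase_ssubset hx,
      (card_insert_le x T).trans (Nat.add_le_add_right hF.card_separator_le 1)⟩
  refine ⟨A, S, B, h, hAF, hS.antisymm ?_, fun A' S' B' h' hA' => ?_⟩
  · by_contra! hlt
    exact (hF.card_le _ _ _ h (Nat.le_of_lt_succ hlt)).not_gt (card_lt_card hAF)
  · by_contra! hle
    exact hA'.2 (hmin ⟨S', B', h', hA'.trans hAF, hle⟩ hA'.1)

theorem exists_adj_forall_le_card_separator (hF : IsAtomSeparation G k F T R) (hG : KConnected G k)
    (hF2 : 1 < #F) (hbig : ∀ A S B, IsSeparation G A S B → #S ≤ k + 1 → k + 1 < 2 * #A) :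
    ∃ x y, G.Adj x y ∧ ∀ A S B, IsSeparation G A S B → x ∈ S → y ∈ S → k + 2 ≤ #S := by
  classical
  have hFk : k < 2 * #F := (Nat.lt_succ_self k).trans
    (hbig _ _ _ hF.toIsSeparation (hF.card_separator_le.trans k.le_succ))
  obtain ⟨A, S, B, h, hAF, hS, hmin⟩ := hF.exists_minimal_isSeparation_ssubset hF2
  obtain ⟨y, hyS, hyT⟩ : ∃ y ∈ S, y ∉ T :=
    exists_mem_notMem_of_card_lt_card (hS ▸ Nat.lt_succ_of_le hF.card_separator_le)
  obtain ⟨x, hxA, hxy⟩ := hF.exists_adj_of_mem_separator h hAF hS.le hyS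
  have hyF : y ∈ F := by
    rcases hF.cover y with hyF | hyT' | hyR
    · exact hyF
    · exact absurd hyT' hyT
    · exact absurd hxy (hF.not_adj x (hAF.1 hxA) y hyR)
  refine ⟨x, y, hxy, fun A₁ S₁ B₁ h₁ hxS₁ hyS₁ => ?_⟩
  by_contra! hlt
  have hS₁ : #S₁ ≤ k + 1 := Nat.le_of_lt_succ hlt
  obtain ⟨A₂, S₂, B₂, h₂, hinter, hsmall | ⟨hle, hsub, hdisj⟩⟩ :=
    h.exists_isSeparation_of_crossing h₁ hS.le hS₁ (hbig _ _ _ h hS.le) (hbig _ _ _ h.symm hS.le)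
      (hbig _ _ _ h₁ hS₁) (hbig _ _ _ h₁.symm hS₁)
  · have hyS₂ : y ∈ S₂ := hinter (mem_inter.2 ⟨hyS, hyS₁⟩)
    have := hF.lt_card_separator_of_mem hG hFk h₂ hyF hyS₂
    omega
  · have hssub : A₂ ⊂ A :=
      (ssubset_iff_of_subset hsub).2 ⟨x, hxA, disjoint_right.1 hdisj hxS₁⟩
    exact (hmin _ _ _ h₂ hssub).not_ge hle

end IsAtomSeparation

namespace KConnected

theorem exists_vertex_forall_lt_card_separator (hG : KConnected G j)
    (hbig : ∀ A S B, IsSeparation G A S B → #S ≤ j → j < 2 * #A) :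
    ∃ x, ∀ A S B, IsSeparation G A S B → x ∈ S → j < #S := by
  by_cases hsmall : ∃ A S B, IsSeparation G A S B ∧ #S ≤ j
  · obtain ⟨A, S, B, h, hS⟩ := hsmall
    obtain ⟨F, T, R, hF⟩ := h.exists_isAtomSeparation hS
    obtain ⟨x, hx⟩ := hF.nonempty_left
    have hFj := hbig _ _ _ hF.toIsSeparation hF.card_separator_le
    exact ⟨x, fun A S B h => hF.lt_card_separator_of_mem hG hFj h hx⟩
  · push Not at hsmall
    obtain ⟨x⟩ : Nonempty V := (Nat.card_pos_iff.1 (j.succ_pos.trans_le hG.1)).1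
    exact ⟨x, fun A S B h _ => hsmall A S B h⟩

theorem exists_adj_forall_le_card_separator [Fintype V] [DecidableRel G.Adj] (hG : KConnected G k)
    (hδ : ∀ v, 3 * (k + 1) / 2 ≤ G.degree v) :
    ∃ x y, G.Adj x y ∧ ∀ A S B, IsSeparation G A S B → x ∈ S → y ∈ S → k + 2 ≤ #S := by
  have hbig (A S B : Finset V) (h : IsSeparation G A S B) (hS : #S ≤ k + 1) : k + 1 < 2 * #A :=
    h.lt_two_mul_card_left hS hδ
  by_cases hsep : ∃ A S B, IsSeparation G A S B ∧ #S ≤ k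
  · obtain ⟨A, S, B, h, hS⟩ := hsep
    obtain ⟨F, T, R, hF⟩ := h.exists_isAtomSeparation hS
    obtain ⟨a, ha⟩ := hF.nonempty_left
    have hF2 : 1 < #F := by
      have := hF.degree_lt_card_add_card ha
      have := hF.card_separator_le
      have := hδ a
      omega
    exact hF.exists_adj_forall_le_card_separator hG hF2 hbig
  · push Not at hsep
    obtain ⟨v⟩ : Nonempty V := (Nat.card_pos_iff.1 (k.succ_pos.trans_le hG.1)).1
    have hcard : k + 2 ≤ Nat.card V := by
      have := G.degree_lt_card_verts v
      have := hδ v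
      rw [Nat.card_eq_fintype_card]
      omega
    have hG' : KConnected G (k + 1) := kConnected_iff_forall_isSeparation.2 ⟨hcard, hsep⟩
    obtain ⟨x, hx⟩ := hG'.exists_vertex_forall_lt_card_separator hbig
    obtain ⟨y, hxy⟩ := (G.degree_pos_iff_exists_adj x).1 (by have := hδ x; omega)
    exact ⟨x, y, hxy, fun A S B h hxS _ => hx A S B h hxS⟩

end KConnected

/-- For even `k` the degree bound `⌊3(k + 1)/2⌋` is `⌊3k/2⌋ + 1`, for odd `k` it is
`⌊3k/2⌋ + 2`. -/
theorem stmt_9_general [Fintype V] [DecidableRel G.Adj] (hk : 0 < k) (hG : KConnected G k)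
    (hδ : ∀ v, 3 * (k + 1) / 2 ≤ G.degree v) :
    ∃ x y : V, G.Adj x y ∧ KConnected (G.induce (({x, y} : Set V)ᶜ)) k := by
  classical
  obtain ⟨x, y, hxy, hsep⟩ := hG.exists_adj_forall_le_card_separator hδ
  have hcard : k + 1 + 2 ≤ Nat.card V := by
    have := G.degree_lt_card_verts x
    have := hδ x
    rw [Nat.card_eq_fintype_card]
    omega
  refine ⟨x, y, hxy, ?_⟩
  rw [← coe_pair]
  apply kConnected_induce_compl <;> rw [card_pair hxy.ne]
  · exact hcard
  · intro A S B h hS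
    rw [insert_subset_iff, singleton_subset_iff] at hS
    exact hsep A S B h hS.1 hS.2

end Separations

/-- Every `k`-connected graph `G` with `δ(G) ≥ ⌊3k/2⌋ + 2` has an edge `xy`
such that `G - {x, y}` is still `k`-connected. -/
theorem stmt_9 {V : Type*} [Fintype V] [DecidableEq V] (G : SimpleGraph V)
    [DecidableRel G.Adj] (k : ℕ) (hk : 0 < k)
    (hG : KConnected G k)
    (hδ : ∀ v : V, 3 * k / 2 + 2 ≤ G.degree v) :
    ∃ x y : V, G.Adj x y ∧ KConnected (G.induce (({x, y} : Set V)ᶜ)) k :=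
  stmt_9_general hk hG fun v => le_trans (by omega) (hδ v)
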